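/- Let m ≥ 1 and let R ⊆ ℤ^m. Let L = {0, +, −, <, Ṙ} where Ṙ is an m-ary relation symbol, and let M be the L-structure whose universe is ℤ with the standard ordered additive group structure and with Ṙ interpreted as R. If Th(M) is strong, then R is definable with parameters in the ordered abelian group ⟨ℤ; 0, +, −, <⟩ (i.e., R is Presburger-definable). -/

import Mathlib

/- Common model-theoretic definitions. -/

open FirstOrder Set

universe u v w

/-- An inp-pattern of depth `κ` in `nvars` free variables witnessed in the `L`-structure `N`:
formulas `φ α (x̄; ȳ_α)` (with `m α` parameter variables), positive integers `k α`, and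
parameter tuples `b α i` such that each row is `k α`-inconsistent (no tuple of `N` realizes
`φ α (x̄; b α i)` for `k α` distinct values of `i`), while every path is finitely consistent. -/
def IsInpPattern (L : FirstOrder.Language.{u, v}) (N : Type*) [L.Structure N]
    (κ : Type*) (nvars : ℕ) : Prop :=
  ∃ (m : κ → ℕ) (φ : ∀ α : κ, L.Formula (Fin nvars ⊕ Fin (m α)))
    (k : κ → ℕ) (b : ∀ α : κ, ℕ → Fin (m α) → N),
    (∀ α, 1 ≤ k α) ∧
    (∀ α : κ, ¬ ∃ (x : Fin nvars → N) (s : Finset ℕ),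
        k α ≤ s.card ∧ ∀ i ∈ s, (φ α).Realize (Sum.elim x (b α i))) ∧
    (∀ (η : κ → ℕ) (S : Finset κ), ∃ x : Fin nvars → N,
        ∀ α ∈ S, (φ α).Realize (Sum.elim x (b α (η α))))

/-- `Th(M)` has burden at least `n`: some model of `Th(M)` witnesses an inp-pattern of
depth `n` in a single variable. -/
def HasBurdenAtLeast (L : FirstOrder.Language.{u, v}) (M : Type w) [L.Structure M]
    (n : ℕ) : Prop :=
  ∃ N : FirstOrder.Language.Theory.ModelType.{u, v, max u v w} (L.completeTheory M),
    IsInpPattern L N (Fin n) 1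

/-- `Th(M)` has finite burden: for some `n`, no model of `Th(M)` witnesses an inp-pattern of
depth `n + 1` in a single variable. -/
def HasFiniteBurden (L : FirstOrder.Language.{u, v}) (M : Type w) [L.Structure M] : Prop :=
  ∃ n : ℕ, ¬ HasBurdenAtLeast L M (n + 1)

/-- `Th(M)` is strong: no model of `Th(M)` witnesses an inp-pattern of depth `ω` in any
finite tuple of variables. -/
def IsStrong (L : FirstOrder.Language.{u, v}) (M : Type w) [L.Structure M] : Prop :=
  ∀ (N : FirstOrder.Language.Theory.ModelType.{u, v, max u v w} (L.completeTheory M))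
    (nvars : ℕ), ¬ IsInpPattern L N ℕ nvars

/-- A set `D` in a linear order is discrete if each of its points is isolated in it. -/
def DiscreteIn {R : Type*} [LinearOrder R] (D : Set R) : Prop :=
  ∀ x ∈ D, ∃ a b : R, a < x ∧ x < b ∧ Set.Ioo a b ∩ D = {x}

/-- `M` is definably complete: every nonempty definable subset of `R` that is bounded above
has a least upper bound. -/
def DefinablyComplete (L : FirstOrder.Language.{u, v}) (R : Type w)
    [LinearOrder R] [L.Structure R] : Prop :=
  ∀ X : Set R, (Set.univ : Set R).Definable₁ L X → X.Nonempty → BddAbove X →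
    ∃ a : R, IsLUB X a

/-- Function symbols of the language `{0, +, −, <}` of ordered abelian groups. -/
inductive OagFunc : ℕ → Type
  | zero : OagFunc 0
  | neg : OagFunc 1
  | add : OagFunc 2

/-- Relation symbols of the language `{0, +, −, <}`: just the binary `<`. -/
inductive OagRel : ℕ → Type
  | lt : OagRel 2

/-- The language `{0, +, −, <}` of ordered abelian groups. -/
def Loag : FirstOrder.Language := ⟨OagFunc, OagRel⟩

/-- The standard `{0, +, −, <}`-structure on `ℤ` (Presburger arithmetic). -/
instance : Loag.Structure ℤ where
  funMap {n} f v :=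
    match f with
    | .zero => 0
    | .neg => -(v 0)
    | .add => v 0 + v 1
  RelMap {n} r v :=
    match r with
    | .lt => v 0 < v 1

/-- Relation symbols of the language `{0, +, −, <, Ṙ}` with `Ṙ` an `m`-ary relation
symbol. -/
inductive OagRRel (m : ℕ) : ℕ → Type
  | lt : OagRRel m 2
  | r : OagRRel m m

/-- The language `{0, +, −, <, Ṙ}` with `Ṙ` an `m`-ary relation symbol. -/
def LoagR (m : ℕ) : FirstOrder.Language := ⟨OagFunc, OagRRel m⟩

/-- The `{0, +, −, <, Ṙ}`-structure on `ℤ` with the standard ordered additive group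
structure and `Ṙ` interpreted as `R ⊆ ℤ^m`. -/
def structR (m : ℕ) (R : Set (Fin m → ℤ)) : (LoagR m).Structure ℤ where
  funMap {n} f v :=
    match f with
    | .zero => 0
    | .neg => -(v 0)
    | .add => v 0 + v 1
  RelMap {n} r v :=
    match n, r with
    | _, .lt => v 0 < v 1
    | _, .r => v ∈ R

/-!
In a strong expansion of `(ℤ, +, <)` no definable family of sets contains, for all `n` and `d`, a
`d`-separated set of more than `n` natural numbers: greedy expansions along increasingly sparse
members of such a family would yield, in an ultrapower, an inp-pattern of depth `ω`. Applied to the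
recurrence times of the patterns of a set, this makes every definable family `A b` of subsets of `ℤ`
uniformly almost periodic: for some `P > 0`, the equivalence `x ∈ A b ↔ x + P ∈ A b` has boundedly
many exceptions. Almost periodicity of the superlevel sets of differences and of the images of
intervals makes every definable family of functions `ℤ → ℤ` piecewise linear on the residue classes
modulo some `Q`, with boundedly many breaks and finitely many slopes. The breaks and the values next
to them are definable functions of fewer variables, so induction on the number of variables shows
that every definable function is Presburger-definable.
-/

/-- A structure on `ℤ` in which Presburger arithmetic is definable with parameters. -/
class DefinesPresburger (L : FirstOrder.Language.{u, v}) [L.Structure ℤ] : Prop where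
  add : univ.DefinableFun L fun v : Fin 2 → ℤ => v 0 + v 1
  lt : univ.Definable L {v : Fin 2 → ℤ | v 0 < v 1}

namespace DefinesPresburger

variable {L : FirstOrder.Language.{u, v}} [L.Structure ℤ] {α β : Type*}

@[fun_prop]
theorem definableFun_const (a : ℤ) : univ.DefinableFun L fun _ : α → ℤ => a :=
  L.definableFun_const α (mem_univ a)

theorem definable_exists {p : (α → ℤ) → ℤ → Prop}
    (hp : univ.Definable L {w : Option α → ℤ | p (w ∘ some) (w none)}) :
    univ.Definable L {v | ∃ x, p v x} := by
  have h := (hp.preimage_comp fun o : Option α => o.elim (Sum.inr ()) Sum.inl).exists_of_finite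
  convert! h using 1
  ext v
  exact ⟨fun ⟨x, hx⟩ => ⟨fun _ => x, hx⟩, fun ⟨u, hu⟩ => ⟨u (), hu⟩⟩

theorem definable_forall {p : (α → ℤ) → ℤ → Prop}
    (hp : univ.Definable L {w : Option α → ℤ | p (w ∘ some) (w none)}) :
    univ.Definable L {v | ∀ x, p v x} := by
  convert! (definable_exists (p := fun v x => ¬ p v x) hp.compl).compl using 1
  ext v
  simp

theorem definable_imp {p q : (α → ℤ) → Prop} (hp : univ.Definable L {v | p v})
    (hq : univ.Definable L {v | q v}) : univ.Definable L {v | p v → q v} :=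
  hp.himp hq

theorem definable_iff {p q : (α → ℤ) → Prop} (hp : univ.Definable L {v | p v})
    (hq : univ.Definable L {v | q v}) : univ.Definable L {v | p v ↔ q v} := by
  simpa only [iff_iff_implies_and_implies] using!
    (definable_imp hp hq).inter (definable_imp hq hp)

variable {f g : (α → ℤ) → ℤ}

theorem definableFun_reindex (hf : univ.DefinableFun L f) (e : α → β) :
    univ.DefinableFun L fun v : β → ℤ => f (v ∘ e) :=
  hf.preimage_comp (Option.map e)

theorem definableFun_of_graph {p : (α → ℤ) → ℤ → Prop}
    (hp : univ.Definable L {w : Option α → ℤ | p (w ∘ some) (w none)})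
    (h : ∀ v x, f v = x ↔ p v x) : univ.DefinableFun L f := by
  unfold DefinableFun Function.tupleGraph
  simpa only [h]

variable [DefinesPresburger L]

theorem definable_lt (hf : univ.DefinableFun L f) (hg : univ.DefinableFun L g) :
    univ.Definable L {v | f v < g v} := by
  have h : univ.DefinableMap L fun v => ![f v, g v] := by simp [DefinableMap, hf, hg]
  exact (lt (L := L)).preimage_map h

theorem definable_le (hf : univ.DefinableFun L f) (hg : univ.DefinableFun L g) :
    univ.Definable L {v | f v ≤ g v} := by
  simpa only [compl_ofPred, not_lt] using (definable_lt hg hf).compl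

@[fun_prop]
theorem definableFun_add (hf : univ.DefinableFun L f) (hg : univ.DefinableFun L g) :
    univ.DefinableFun L fun v => f v + g v := by
  have h : univ.DefinableMap L fun v => ![f v, g v] := by simp [DefinableMap, hf, hg]
  exact (add (L := L)).comp h

@[fun_prop]
theorem definableFun_neg (hf : univ.DefinableFun L f) : univ.DefinableFun L fun v => -f v :=
  definableFun_of_graph (p := fun v x => x + f v = 0)
    ((definableFun_add (.proj L) (definableFun_reindex hf some)).ofPred_eq_const (mem_univ 0))
    fun v x => by omega

@[fun_prop]
theorem definableFun_sub (hf : univ.DefinableFun L f) (hg : univ.DefinableFun L g) :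
    univ.DefinableFun L fun v => f v - g v := by
  simpa only [sub_eq_add_neg] using definableFun_add hf (definableFun_neg hg)

theorem definableFun_natCast_mul (n : ℕ) (hf : univ.DefinableFun L f) :
    univ.DefinableFun L fun v => n * f v := by
  induction n with
  | zero => simpa using! definableFun_const 0
  | succ n ih => simpa only [Nat.cast_succ, add_one_mul] using definableFun_add ih hf

@[fun_prop]
theorem definableFun_const_mul (c : ℤ) (hf : univ.DefinableFun L f) :
    univ.DefinableFun L fun v => c * f v := by
  obtain ⟨n, rfl | rfl⟩ := c.eq_nat_or_neg
  · exact definableFun_natCast_mul n hf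
  · simpa only [neg_mul] using definableFun_neg (definableFun_natCast_mul n hf)

theorem definableFun_ediv_const {n : ℤ} (hn : 0 < n) (hf : univ.DefinableFun L f) :
    univ.DefinableFun L fun v => f v / n := by
  have hf' := definableFun_reindex hf (some : α → Option α)
  refine definableFun_of_graph (p := fun v x => n * x ≤ f v ∧ f v < n * x + n)
    ((definable_le (by fun_prop) hf').inter (definable_lt hf' (by fun_prop))) fun v x => ?_
  constructor
  · rintro rfl
    exact ⟨Int.mul_ediv_self_le hn.ne', Int.lt_mul_ediv_self_add hn⟩
  · rintro ⟨h₁, h₂⟩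
    exact le_antisymm (Int.lt_add_one_iff.1 (Int.ediv_lt_of_lt_mul hn (by linarith)))
      (Int.le_ediv_of_mul_le hn (by linarith))

theorem definableFun_emod_const {n : ℤ} (hn : 0 < n) (hf : univ.DefinableFun L f) :
    univ.DefinableFun L fun v => f v % n := by
  simpa only [Int.emod_def] using
    definableFun_sub hf (definableFun_const_mul n (definableFun_ediv_const hn hf))

end DefinesPresburger

/-- A definable family of sets of integers: membership `x ∈ A b` is definable, with parameters, in
the tuple `b` and the point `x` together; `x` is the coordinate `none`. -/
def DefinableFamily (L : FirstOrder.Language.{u, v}) [L.Structure ℤ] {α : Type*}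
    (A : (α → ℤ) → Set ℤ) : Prop :=
  univ.Definable L {w : Option α → ℤ | w none ∈ A (w ∘ some)}

/-- A definable family of functions `f b : ℤ → ℤ`: the value `f b x` is definable, with parameters,
in the tuple `b` and the point `x` together; `x` is the coordinate `none`. -/
def DefinableFunFamily (L : FirstOrder.Language.{u, v}) [L.Structure ℤ] {α : Type*}
    (f : (α → ℤ) → ℤ → ℤ) : Prop :=
  univ.DefinableFun L fun w : Option α → ℤ => f (w ∘ some) (w none)

section Families

open DefinesPresburger

variable {L : FirstOrder.Language.{u, v}} [L.Structure ℤ] {α β ι : Type*}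
  {A : (α → ℤ) → Set ℤ} {f : (α → ℤ) → ℤ → ℤ}

theorem DefinableFamily.definable_mem [Finite α] (hA : DefinableFamily L A)
    {g : (β → ℤ) → α → ℤ} {h : (β → ℤ) → ℤ} (hg : univ.DefinableMap L g)
    (hh : univ.DefinableFun L h) : univ.Definable L {v | h v ∈ A (g v)} := by
  have hgh : univ.DefinableMap L fun v (o : Option α) => o.elim (h v) (g v) := by
    rintro (_ | i)
    exacts [hh, hg i]
  exact hA.preimage_map hgh

theorem DefinableFunFamily.definableFun_apply [Finite α] (hf : DefinableFunFamily L f)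
    {g : (β → ℤ) → α → ℤ} {h : (β → ℤ) → ℤ} (hg : univ.DefinableMap L g)
    (hh : univ.DefinableFun L h) : univ.DefinableFun L fun v => f (g v) (h v) := by
  have hgh : univ.DefinableMap L fun v (o : Option α) => o.elim (h v) (g v) := by
    rintro (_ | i)
    exacts [hh, hg i]
  exact hf.comp hgh

theorem definableFun_piecewise [Finite ι] {F : (α → ℤ) → ℤ} {p : ι → (α → ℤ) → Prop}
    {h : ι → (α → ℤ) → ℤ} (hp : ∀ i, univ.Definable L {v | p i v})
    (hh : ∀ i, univ.DefinableFun L (h i)) (hF : ∀ i v, p i v → F v = h i v)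
    (hcover : ∀ v, ∃ i, p i v) : univ.DefinableFun L F := by
  have hgraph := definable_iUnion_of_finite fun i => ((hp i).preimage_comp some).inter (hh i)
  unfold DefinableFun
  convert! hgraph
  ext w
  simp only [Function.tupleGraph, mem_ofPred_eq, mem_iUnion, mem_inter_iff, mem_preimage]
  constructor
  · intro hw
    obtain ⟨i, hi⟩ := hcover (w ∘ some)
    exact ⟨i, hi, (hF i _ hi).symm.trans hw⟩
  · rintro ⟨i, hi, hw⟩
    exact (hF i _ hi).trans hw

variable [DefinesPresburger L]

theorem DefinableFamily.definableFun_sSup (hA : DefinableFamily L A) :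
    univ.DefinableFun L fun v => sSup (A v) := by
  have hgreatest : univ.Definable L {w : Option α → ℤ | IsGreatest (A (w ∘ some)) (w none)} :=
    hA.inter <| definable_forall <| definable_imp (hA.preimage_comp (Option.map some))
      (definable_le (.proj L) (.proj L))
  refine definableFun_of_graph
    (p := fun v x => IsGreatest (A v) x ∨ (¬ ∃ y, IsGreatest (A v) y) ∧ x = 0)
    (hgreatest.union <| (definable_exists (hgreatest.preimage_comp (Option.map some))).compl.inter
      (DefinableFun.proj L |>.ofPred_eq_const (mem_univ 0))) fun v x => ?_
  by_cases hv : (A v).Nonempty ∧ BddAbove (A v)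
  · have hsup : IsGreatest (A v) (sSup (A v)) :=
      ⟨Int.csSup_mem hv.1 hv.2, fun y hy => le_csSup hv.2 hy⟩
    exact ⟨fun hx => .inl (hx ▸ hsup), fun hx => hx.elim hsup.unique fun h => (h.1 ⟨_, hsup⟩).elim⟩
  · have hnot : ¬ ∃ y, IsGreatest (A v) y := fun ⟨y, hy⟩ => hv ⟨hy.nonempty, hy.bddAbove⟩
    have hsup : sSup (A v) = 0 := by
      rcases not_and_or.1 hv with h | h
      · rw [not_nonempty_iff_eq_empty.1 h, Int.csSup_empty]
      · exact Int.csSup_of_not_bddAbove h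
    exact ⟨fun hx => .inr ⟨hnot, hx ▸ hsup⟩,
      fun hx => hx.elim (fun h => (hnot ⟨x, h⟩).elim) fun h => hsup.trans h.2.symm⟩

end Families

section Compactness

open Language

variable {L : FirstOrder.Language.{u, v}} {n : ℕ}

theorem exists_realize_finset_params {M : Type*} [L.Structure M] {δ : Type*}
    (φ : L.Formula (Fin n ⊕ δ)) : ∃ (m : ℕ) (ψ : L.Formula (Fin n ⊕ Fin m)) (g : Fin m → δ),
    ∀ (x : Fin n → M) (e : δ → M),
      ψ.Realize (Sum.elim x (e ∘ g)) ↔ φ.Realize (Sum.elim x e) := by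
  classical
  let s : Finset δ := φ.freeVarFinset.toRight
  let f : φ.freeVarFinset → Fin n ⊕ Fin s.card
    | ⟨.inl i, _⟩ => .inl i
    | ⟨.inr d, hd⟩ => .inr (s.equivFin ⟨d, Finset.mem_toRight.2 hd⟩)
  refine ⟨s.card, φ.restrictFreeVar f, fun j => s.equivFin.symm j, fun x e =>
    BoundedFormula.realize_restrictFreeVar _ ?_⟩
  rintro ⟨i | d, hd⟩ <;> simp [f]

theorem exists_realize_of_definable {M : Type*} [L.Structure M] {γ : Type*}
    {S : Set (Fin n ⊕ γ → M)} (hS : univ.Definable L S) :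
    ∃ (m : ℕ) (φ : L.Formula (Fin n ⊕ Fin m)) (code : (γ → M) → Fin m → M),
      ∀ x e, φ.Realize (Sum.elim x (code e)) ↔ Sum.elim x e ∈ S := by
  obtain ⟨χ, rfl⟩ := definable_iff_exists_formula_sum.1 hS
  obtain ⟨m, φ, g, hφ⟩ := exists_realize_finset_params (M := M)
    (χ.relabel (Sum.elim (Sum.inr ∘ Sum.inl) (Sum.map id Sum.inr)))
  refine ⟨m, φ, fun e => Sum.elim (↑) e ∘ g, fun x e => ?_⟩
  rw [hφ, Formula.realize_relabel, mem_ofPred_eq]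
  congr! 1
  ext (c | i | d) <;> rfl

theorem IsInpPattern.of_equiv {N : Type*} {N' : Type*} [L.Structure N] [L.Structure N']
    {κ : Type*} (e : N ≃[L] N') (h : IsInpPattern L N κ n) : IsInpPattern L N' κ n := by
  obtain ⟨m, φ, k, b, hk, hrow, hpath⟩ := h
  have hrealize (a i) (x : Fin n → N) :
      (φ a).Realize (Sum.elim (e ∘ x) (e ∘ b a i)) ↔ (φ a).Realize (Sum.elim x (b a i)) := by
    rw [← Sum.comp_elim, StrongHomClass.realize_formula]
  refine ⟨m, φ, k, fun a i => e ∘ b a i, hk, ?_, fun η S => ?_⟩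
  · rintro a ⟨x, s, hs, hx⟩
    obtain ⟨x, rfl⟩ := e.surjective.comp_left x
    exact hrow a ⟨x, s, hs, fun i hi => (hrealize a i x).1 (hx i hi)⟩
  · obtain ⟨x, hx⟩ := hpath η S
    exact ⟨e ∘ x, fun a ha => (hrealize a _ x).2 (hx a ha)⟩

theorem IsStrong.not_isInpPattern {M N : Type w} [L.Structure M] [L.Structure N] [Nonempty N]
    [L.completeTheory M |>.Model N] (h : IsStrong L M) : ¬ IsInpPattern L N ℕ n :=
  fun hN => h (Theory.ModelType.ulift.{u, v, w, max u v} ⟨N⟩) n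
    (hN.of_equiv Equiv.ulift.symm.inducedStructureEquiv)

theorem realize_ultrapower_mk {M : Type*} [L.Structure M] [Nonempty M] {ι β γ : Type*}
    (U : Ultrafilter ι) (φ : L.Formula (β ⊕ γ)) (x : β → ι → M) (b : ι → γ → M) :
    φ.Realize (Sum.elim (fun j => (Quotient.mk _ (x j) : (U : Filter ι).Product fun _ => M))
      fun j => Quotient.mk _ fun N => b N j) ↔
        ∀ᶠ N in (U : Filter ι), φ.Realize (Sum.elim (fun j => x j N) (b N)) := by
  convert! Ultraproduct.realize_formula_cast (u := U) (M := fun _ => M) φ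
    (Sum.elim x fun j N => b N j) using 2
  · ext (j | j) <;> rfl
  · ext N
    congr! 1
    ext (j | j) <;> rfl

theorem not_isStrong_of_finite_patterns {M : Type w} [L.Structure M] [Nonempty M] {m k : ℕ → ℕ}
    {φ : ∀ a, L.Formula (Fin n ⊕ Fin (m a))} (b : ℕ → ∀ a, ℕ → Fin (m a) → M)
    (hk : ∀ a, 1 ≤ k a)
    (hrow : ∀ N, ∀ a < N, ∀ x, ∀ s ⊆ Finset.range N,
      (∀ i ∈ s, (φ a).Realize (Sum.elim x (b N a i))) → s.card < k a)
    (hpath : ∀ (N : ℕ) (η : ℕ → ℕ), ∃ x, ∀ a < N, η a < N →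
      (φ a).Realize (Sum.elim x (b N a (η a)))) :
    ¬ IsStrong L M := fun hstrong => by
  let U := Filter.hyperfilter ℕ
  have : (L.completeTheory M).Model ((U : Filter ℕ).Product fun _ => M) :=
    ⟨fun ψ hψ => (Ultraproduct.sentence_realize ψ).2 (.of_forall fun _ => hψ)⟩
  have hlarge (a : ℕ) : ∀ᶠ N in (U : Filter ℕ), a < N :=
    Nat.hyperfilter_le_atTop (Filter.eventually_gt_atTop a)
  refine hstrong.not_isInpPattern (N := (U : Filter ℕ).Product fun _ => M)
    ⟨m, φ, k, fun a i j => Quotient.mk _ fun N => b N a i j, hk, ?_, fun η S => ?_⟩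
  · rintro a ⟨x, s, hs, hx⟩
    choose x' hx' using fun j => Quotient.exists_rep (x j)
    obtain rfl : (fun j => Quotient.mk _ (x' j)) = x := funext hx'
    have hall : ∀ᶠ N in (U : Filter ℕ), ∀ i ∈ s, i < N ∧
        (φ a).Realize (Sum.elim (fun j => x' j N) (b N a i)) :=
      (Filter.eventually_all_finset s).2 fun i hi =>
        (hlarge i).and ((realize_ultrapower_mk U _ x' _).1 (hx i hi))
    obtain ⟨N, hN, ha⟩ := (hall.and (hlarge a)).exists
    exact (hrow N a ha _ s (fun i hi => Finset.mem_range.2 (hN i hi).1)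
      fun i hi => (hN i hi).2).not_ge hs
  · choose x hx using fun N => hpath N η
    refine ⟨fun j => Quotient.mk _ fun N => x N j, fun a _ =>
      (realize_ultrapower_mk U _ (fun j N => x N j) _).2 ?_⟩
    filter_upwards [hlarge a, hlarge (η a)] with N ha hη using hx N a ha hη

end Compactness

/-- The remainder of `x` after `a` steps of greedy expansion: step `j` subtracts the largest element
of `S j` not exceeding the current remainder (or the junk value `0` of `sSup` if there is none). -/
noncomputable def greedyRem (S : ℕ → Set ℤ) (x : ℤ) : ℕ → ℤ
  | 0 => x
  | a + 1 => greedyRem S x a - sSup (S a ∩ Iic (greedyRem S x a))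

/-- The digit subtracted at step `a` of the greedy expansion of `x`. -/
noncomputable def greedyDigit (S : ℕ → Set ℤ) (x : ℤ) (a : ℕ) : ℤ :=
  sSup (S a ∩ Iic (greedyRem S x a))

section Greedy

theorem greedyRem_succ_left (S : ℕ → Set ℤ) (x : ℤ) (a : ℕ) :
    greedyRem S x (a + 1) = greedyRem (fun j => S (j + 1)) (x - greedyDigit S x 0) a := by
  induction a with
  | zero => rfl
  | succ a ih => rw [greedyRem, ih, greedyRem]

theorem greedyDigit_succ (S : ℕ → Set ℤ) (x : ℤ) (a : ℕ) :
    greedyDigit S x (a + 1) = greedyDigit (fun j => S (j + 1)) (x - greedyDigit S x 0) a := by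
  rw [greedyDigit, greedyRem_succ_left]
  rfl

theorem greedyDigit_zero_add {S : ℕ → Set ℤ} {c x M : ℤ} (hc : c ∈ S 0)
    (hS : (S 0).Pairwise fun y z => M < |y - z|) (hx : x ∈ Icc 0 M) :
    greedyDigit S (c + x) 0 = c := by
  refine IsGreatest.csSup_eq ⟨⟨hc, le_add_of_nonneg_right hx.1⟩, fun y ⟨hy, hyx⟩ => ?_⟩
  by_contra! hcy
  have hfar : M < |y - c| := hS hy hc hcy.ne'
  rw [abs_of_pos (sub_pos.2 hcy)] at hfar
  have hnear : y ≤ c + x := hyx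
  linarith [hx.2]

theorem exists_seq_of_lt_encard {β : Type*} {s : Set β} {N : ℕ} (h : N < s.encard) :
    ∃ c : ℕ → β, (∀ i, c i ∈ s) ∧ (range c).Finite ∧ InjOn c (Iio N) := by
  have : Nonempty β := (encard_pos.1 (pos_of_gt h)).to_type
  have hcard : (Iic N).encard ≤ s.encard := by
    rw [← Finset.coe_Iic, encard_coe_eq_coe_finsetCard, Nat.card_Iic]
    exact_mod_cast Order.add_one_le_of_lt h
  obtain ⟨f, hfs, hf⟩ := (finite_Iic N).exists_injOn_of_encard_le hcard
  refine ⟨fun i => f (min i N), fun i => hfs (min_le_right i N), ?_, fun i hi j hj hij => ?_⟩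
  · exact ((finite_Iic N).image f).subset (range_subset_iff.2 fun i => ⟨_, min_le_right i N, rfl⟩)
  · rw [mem_Iio] at hi hj
    simpa only [min_eq_left hi.le, min_eq_left hj.le] using
      hf (min_le_right i N) (min_le_right j N) hij

theorem exists_greedyDigit_eq {ι : Type*} {X : ι → Set ℤ}
    (hX : ∀ (n : ℕ) (d : ℤ), 0 < d →
      ∃ b, X b ⊆ Ici 0 ∧ ((X b).Pairwise fun x y => d ≤ |x - y|) ∧ n < (X b).encard)
    (N k : ℕ) :
    ∃ (b : ℕ → ι) (c : ℕ → ℕ → ℤ) (M : ℤ), (∀ a < k, InjOn (c a) (Iio N)) ∧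
      ∀ η : ℕ → ℕ, ∃ x ∈ Icc 0 M, ∀ a < k, greedyDigit (X ∘ b) x a = c a (η a) := by
  induction k with
  | zero =>
    obtain ⟨b, -⟩ := hX 0 1 one_pos
    exact ⟨fun _ => b, fun _ _ => 0, 0, by simp, fun _ => ⟨0, by simp⟩⟩
  | succ k ih =>
    obtain ⟨b, c, M, hc, hx⟩ := ih
    have hM : 0 ≤ M := by
      obtain ⟨x, hx, -⟩ := hx 0
      exact hx.1.trans hx.2
    -- The new leading set has gaps larger than every sum `x ≤ M` of the later digits.
    obtain ⟨b₀, hpos, hsep, hlarge⟩ := hX N (M + 1) (by positivity)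
    obtain ⟨c₀, hc₀, hfin, hinj⟩ := exists_seq_of_lt_encard hlarge
    obtain ⟨C, hC⟩ := hfin.bddAbove
    refine ⟨(Nat.casesOn · b₀ b), (Nat.casesOn · c₀ c), C + M, ?_, fun η => ?_⟩
    · rintro (_ | a) ha
      exacts [hinj, hc a (Nat.lt_of_succ_lt_succ ha)]
    · obtain ⟨x, hxM, hdigit⟩ := hx fun a => η (a + 1)
      have hzero : greedyDigit (X ∘ (Nat.casesOn · b₀ b)) (c₀ (η 0) + x) 0 = c₀ (η 0) :=
        greedyDigit_zero_add (hc₀ _) hsep hxM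
      refine ⟨c₀ (η 0) + x, ⟨add_nonneg (hpos (hc₀ _)) hxM.1,
        add_le_add (hC (mem_range_self _)) hxM.2⟩, ?_⟩
      rintro (_ | a) ha
      · exact hzero
      · rw [greedyDigit_succ, hzero, add_sub_cancel_left]
        exact hdigit a (Nat.lt_of_succ_lt_succ ha)

open DefinesPresburger

variable {L : FirstOrder.Language.{u, v}} [L.Structure ℤ] [DefinesPresburger L] {α β : Type*}
  [Finite α] {X : (α → ℤ) → Set ℤ}

theorem DefinableFamily.definableFun_sSup_inter_Iic (hX : DefinableFamily L X)
    {g : (β → ℤ) → α → ℤ} {h : (β → ℤ) → ℤ} (hg : univ.DefinableMap L g)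
    (hh : univ.DefinableFun L h) : univ.DefinableFun L fun v => sSup (X (g v) ∩ Iic (h v)) :=
  definableFun_sSup <| .inter (hX.definable_mem (fun i => definableFun_reindex (hg i) some)
    (.proj L)) (definable_le (.proj L) (definableFun_reindex hh some))

theorem DefinableFamily.definableFun_greedyRem (hX : DefinableFamily L X)
    {g : ℕ → (β → ℤ) → α → ℤ} {h : (β → ℤ) → ℤ} (hg : ∀ j, univ.DefinableMap L (g j))
    (hh : univ.DefinableFun L h) (a : ℕ) :
    univ.DefinableFun L fun v => greedyRem (fun j => X (g j v)) (h v) a := by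
  induction a with
  | zero => exact hh
  | succ a ih => exact definableFun_sub ih (hX.definableFun_sSup_inter_Iic (hg a) ih)

theorem IsStrong.exists_encard_le_of_separated (hL : IsStrong L ℤ) (hX : DefinableFamily L X) :
    ∃ (n : ℕ) (d : ℤ), 0 < d ∧ ∀ b, X b ⊆ Ici 0 → ((X b).Pairwise fun x y => d ≤ |x - y|) →
      (X b).encard ≤ n := by
  by_contra! hlarge
  choose b c M hinj hpath using fun N => exists_greedyDigit_eq hlarge N N
  have hdigit (a : ℕ) : univ.Definable L {w : Fin 1 ⊕ Option (ℕ × α) → ℤ |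
      greedyDigit (fun j => X fun i => w (.inr (some (j, i)))) (w (.inl 0)) a = w (.inr none)} :=
    (hX.definableFun_sSup_inter_Iic (fun _ => .proj L)
      (hX.definableFun_greedyRem (fun _ _ => .proj L) (.proj L) a)).ofPred_eq (.proj L)
  choose m φ code hφ using fun a => exists_realize_of_definable (hdigit a)
  refine not_isStrong_of_finite_patterns (n := 1) (k := fun _ => 2) (φ := φ)
    (fun N a i => code a fun o => o.elim (c N a i) fun p => b N p.1 p.2) (fun _ => one_le_two)
    (fun N a ha x s hs hx => ?_) (fun N η => ?_) hL
  · simp only [hφ, mem_ofPred_eq] at hx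
    refine Nat.lt_succ_of_le (Finset.card_le_one.2 fun i hi j hj => ?_)
    exact hinj N a ha (Finset.mem_range.1 (hs hi)) (Finset.mem_range.1 (hs hj))
      ((hx i hi).symm.trans (hx j hj))
  · obtain ⟨x, -, hx⟩ := hpath N η
    exact ⟨fun _ => x, fun a ha _ => (hφ a _ _).2 (hx a ha)⟩

end Greedy

section Counting

theorem encard_le_card_mul_of_fiber_le {β κ : Type*} [Fintype κ] {S : Set β} {n : ℕ} (f : β → κ)
    (h : ∀ c, (S ∩ f ⁻¹' {c}).encard ≤ n) : S.encard ≤ (Fintype.card κ * n : ℕ) :=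
  calc S.encard ≤ (⋃ c, S ∩ f ⁻¹' {c}).encard :=
        encard_le_encard fun x hx => mem_iUnion.2 ⟨f x, hx, rfl⟩
    _ ≤ ∑ c, (S ∩ f ⁻¹' {c}).encard := encard_iUnion_le_of_fintype _
    _ ≤ (Fintype.card κ * n : ℕ) := by
        simpa using Finset.sum_le_card_nsmul Finset.univ _ _ fun c _ => h c

theorem encard_le_of_forall_inter_Icc {β : Type*} [LinearOrder β] {S : Set β} {n : ℕ}
    (h : ∀ u ∈ S, ∀ z ∈ S, (S ∩ Icc u z).encard ≤ n) : S.encard ≤ n := by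
  by_contra! hn
  obtain ⟨t, htS, ht⟩ := exists_subset_encard_eq (Order.add_one_le_of_lt hn)
  have hfin : t.Finite := finite_of_encard_eq_coe (k := n + 1) ht
  have hne : t.Nonempty := encard_pos.1 (ht ▸ by positivity)
  obtain ⟨u, hu, hmin⟩ := exists_min_image t id hfin hne
  obtain ⟨z, hz, hmax⟩ := exists_max_image t id hfin hne
  have hsub : t ⊆ S ∩ Icc u z := fun x hx => ⟨htS hx, hmin x hx, hmax x hx⟩
  have hle : t.encard ≤ n := (encard_le_encard hsub).trans (h u (htS hu) z (htS hz))
  exact (ht ▸ hle).not_gt (by exact_mod_cast n.lt_succ_self)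

/-- Cutting at the points of `E` leaves `K + 1` segments. -/
theorem encard_le_of_segments {β : Type*} [LinearOrder β] {S E : Set β} {K n : ℕ}
    (hE : E.encard ≤ K) (h : ∀ u z, Disjoint E (Ico u z) → (S ∩ Icc u z).encard ≤ n) :
    S.encard ≤ ((K + 1) * n : ℕ) := by
  have hfin : E.Finite := finite_of_encard_le_coe hE
  have hcard (x : β) : (E ∩ Iio x).ncard < K + 1 :=
    Nat.lt_succ_of_le <| (ncard_inter_le_ncard_left E _ hfin).trans <| by
      rw [← hfin.cast_ncard_eq] at hE
      exact_mod_cast hE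
  rw [← Fintype.card_fin (K + 1)]
  refine encard_le_card_mul_of_fiber_le (fun x => (⟨_, hcard x⟩ : Fin (K + 1))) fun c =>
    encard_le_of_forall_inter_Icc fun u hu z hz => ?_
  refine (encard_le_encard (inter_subset_inter_left _ inter_subset_left)).trans (h u z ?_)
  rw [disjoint_left]
  rintro e he ⟨hue, hez⟩
  have heq : E ∩ Iio u = E ∩ Iio z := eq_of_subset_of_ncard_le
    (inter_subset_inter_right _ (Iio_subset_Iio (hue.trans hez.le)))
    (Fin.val_eq_of_eq (hz.2.trans hu.2.symm)).le (hfin.inter_of_left _)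
  exact hue.not_gt (heq.ge ⟨he, hez⟩).2

end Counting

section Periodicity

open DefinesPresburger

theorem iff_of_dvd {p : ℤ → Prop} {e P : ℤ} (he : 0 < e) (hP : 0 ≤ P) (hdvd : e ∣ P)
    (h : ∀ t, 0 ≤ t → t < P → (p t ↔ p (t + e))) : p 0 ↔ p P := by
  obtain ⟨k, rfl⟩ := hdvd
  lift k to ℕ using nonneg_of_mul_nonneg_right hP he
  have hmul : ∀ j ≤ k, p 0 ↔ p (e * j) := by
    intro j hj
    induction j with
    | zero => simp
    | succ j ih =>
      rw [ih (by omega), h _ (by positivity) (by gcongr; omega)]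
      simp only [Nat.cast_succ, mul_add_one]
  exact hmul k le_rfl

variable {L : FirstOrder.Language.{u, v}} [L.Structure ℤ] {α : Type*} {A : (α → ℤ) → Set ℤ}

/-- The nonnegative translates by which the first `w` values of the indicator of `A` from `u` on
reappear. -/
def recurrenceSet (A : Set ℤ) (u w : ℤ) : Set ℤ :=
  {y | 0 ≤ y ∧ ∀ t, 0 ≤ t → t < w → (u + y + t ∈ A ↔ u + t ∈ A)}

/-- A difference `e < d` of two recurrence times is a period of a stretch of `A` longer than `d!`,
and `e ∣ d!`. -/
theorem pairwise_recurrenceSet {A : Set ℤ} {u d : ℤ}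
    (hu : ¬ (u ∈ A ↔ u + d.toNat.factorial ∈ A)) :
    (recurrenceSet A u (d.toNat.factorial + 1)).Pairwise fun x y => d ≤ |x - y| := by
  set P : ℤ := (d.toNat.factorial : ℤ)
  intro x hx y hy hxy
  by_contra! hd
  wlog hlt : x < y generalizing x y
  · exact this hy hx hxy.symm (abs_sub_comm x y ▸ hd) (hxy.lt_or_gt.resolve_left hlt)
  have hdvd : y - x ∣ P := by
    rw [abs_sub_comm, abs_of_pos (sub_pos.2 hlt)] at hd
    obtain ⟨e, he⟩ := Int.eq_ofNat_of_zero_le (sub_pos.2 hlt).le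
    rw [he]
    exact Int.natCast_dvd_natCast.2 (Nat.dvd_factorial (by omega) (by omega))
  have hP : 0 ≤ P := Nat.cast_nonneg _
  have hiff : u + x ∈ A ↔ u + x + P ∈ A := by
    have h := iff_of_dvd (p := fun t => u + x + t ∈ A) (sub_pos.2 hlt) hP hdvd
      fun t ht htP => by
        rw [hx.2 t ht (by omega), ← hy.2 t ht (by omega)]
        ring_nf
    simpa only [add_zero] using h
  have h₀ : u + x ∈ A ↔ u ∈ A := by simpa only [add_zero] using hx.2 0 le_rfl (by omega)
  exact hu (h₀.symm.trans (hiff.trans (hx.2 P hP (by omega))))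

variable [Finite α] [DefinesPresburger L]

theorem DefinableFamily.recurrenceSet (hA : DefinableFamily L A) :
    DefinableFamily L fun v : Option (Option α) → ℤ =>
      recurrenceSet (A (v ∘ some ∘ some)) (v (some none)) (v none) := by
  have hmem {h : (Option (Option (Option (Option α))) → ℤ) → ℤ} (hh : univ.DefinableFun L h) :
      univ.Definable L {v | h v ∈ A (v ∘ some ∘ some ∘ some ∘ some)} :=
    hA.definable_mem (fun _ => .proj L) hh
  refine (definable_le (by fun_prop) (.proj L)).inter <| definable_forall <|
    definable_imp (definable_le (by fun_prop) (.proj L)) <|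
      definable_imp (definable_lt (.proj L) (.proj L)) <| definable_iff
        (hmem (definableFun_add (definableFun_add (.proj L) (.proj L)) (.proj L)))
        (hmem (definableFun_add (.proj L) (.proj L)))

theorem IsStrong.exists_almost_periodic (hL : IsStrong L ℤ) (hA : DefinableFamily L A) :
    ∃ P : ℤ, 0 < P ∧ ∃ K : ℕ, ∀ b, {x | ¬ (x ∈ A b ↔ x + P ∈ A b)}.encard ≤ K := by
  obtain ⟨n, d, -, hn⟩ := hL.exists_encard_le_of_separated hA.recurrenceSet
  set P := d.toNat.factorial
  refine ⟨P, Nat.cast_pos.2 (Nat.factorial_pos _), Fintype.card (Set (Fin (P + 1))) * n,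
    fun b => ?_⟩
  refine encard_le_card_mul_of_fiber_le (fun x => {t : Fin (P + 1) | x + (t : ℕ) ∈ A b}) fun c =>
    encard_le_of_forall_inter_Icc fun u hu z _ => ?_
  have hfew : (recurrenceSet (A b) u (P + 1)).encard ≤ n :=
    hn (fun o => o.elim ((P : ℤ) + 1) fun o => o.elim u b) (fun y hy => hy.1)
      (pairwise_recurrenceSet hu.1)
  refine (encard_le_encard_of_injOn (f := fun x => x - u) ?_ sub_left_injective.injOn).trans hfew
  rintro x ⟨⟨-, hx⟩, hux, -⟩
  refine ⟨sub_nonneg.2 hux, fun t ht htP => ?_⟩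
  lift t to ℕ using ht
  have hpattern := Set.ext_iff.1 (hx.trans hu.2.symm) ⟨t, by omega⟩
  rw [add_sub_cancel]
  exact hpattern

end Periodicity

/-- The points at which `g` fails to continue linearly with slope at most `C` in absolute value. -/
def breakSet (C : ℤ) (g : ℤ → ℤ) : Set ℤ :=
  {k | fwdDiff 1 g k ≠ fwdDiff 1 g (k + 1) ∨ C < |fwdDiff 1 g k|}

section Differences

open DefinesPresburger

theorem eq_of_forall_Ico_eq_add_one {γ : Sort*} {h : ℤ → γ} {u z k : ℤ}
    (hstep : ∀ j ∈ Ico u z, h j = h (j + 1)) (hk : k ∈ Icc u z) : h u = h k := by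
  obtain ⟨huk, hkz⟩ := hk
  induction k, huk using Int.leInduction with
  | base => rfl
  | succ k huk ih => exact (ih (by omega)).trans (hstep k ⟨huk, by omega⟩)

theorem strictMonoOn_Icc_of_pos_fwdDiff {g : ℤ → ℤ} {u z k : ℤ}
    (hsign : ∀ j ∈ Ico u z, 0 < fwdDiff 1 g j ↔ 0 < fwdDiff 1 g (j + 1)) (hk : k ∈ Icc u z)
    (hpos : 0 < fwdDiff 1 g k) : StrictMonoOn g (Icc u (z + 1)) := by
  have hconst {j : ℤ} (hj : j ∈ Icc u z) : (0 < fwdDiff 1 g u) = (0 < fwdDiff 1 g j) :=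
    eq_of_forall_Ico_eq_add_one (h := fun j => 0 < fwdDiff 1 g j)
      (fun j hj => propext (hsign j hj)) hj
  refine strictMonoOn_of_lt_add_one ordConnected_Icc fun j _ hj hj' => sub_pos.1 ?_
  exact (hconst ⟨hj.1, by linarith [hj'.2]⟩).mp ((hconst hk).mpr hpos)

variable {L : FirstOrder.Language.{u, v}} [L.Structure ℤ] [DefinesPresburger L] {α : Type*}
  {f : (α → ℤ) → ℤ → ℤ}

theorem DefinableFunFamily.neg (hf : DefinableFunFamily L f) :
    DefinableFunFamily L fun b x => -f b x :=
  definableFun_neg hf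

variable [Finite α]

theorem DefinableFunFamily.progression (hf : DefinableFunFamily L f) (Q : ℤ) :
    DefinableFunFamily L fun (v : Option α → ℤ) k => f (v ∘ some) (v none + Q * k) :=
  hf.definableFun_apply (fun _ => .proj L)
    (definableFun_add (.proj L) (definableFun_const_mul Q (.proj L)))

theorem DefinableFunFamily.image_Icc (hf : DefinableFunFamily L f) :
    DefinableFamily L fun v : Option (Option α) → ℤ =>
      f (v ∘ some ∘ some) '' Icc (v (some none)) (v none) :=
  definable_exists <| ((definable_le (.proj L) (.proj L)).inter
    (definable_le (.proj L) (.proj L))).inter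
      ((hf.definableFun_apply (fun _ => .proj L) (.proj L)).ofPred_eq (.proj L))

theorem DefinableFunFamily.setOf_lt_sub (hf : DefinableFunFamily L f) :
    DefinableFamily L fun v : Option (Option α) → ℤ =>
      {x | v none < f (v ∘ some ∘ some) (x + v (some none)) - f (v ∘ some ∘ some) x} :=
  definable_lt (.proj L) <| definableFun_sub
    (hf.definableFun_apply (fun _ => .proj L) (definableFun_add (.proj L) (.proj L)))
    (hf.definableFun_apply (fun _ => .proj L) (.proj L))

/-- If `j` is a point of increase by more than the almost period `C` of the images `f b '' Icc u z`,
then `f b j` belongs to the image and `f b j + C` does not. -/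
theorem IsStrong.exists_fwdDiff_bound (hL : IsStrong L ℤ) (hf : DefinableFunFamily L f) {K : ℕ}
    (hsign : ∀ b, {k | ¬ (0 < fwdDiff 1 (f b) k ↔ 0 < fwdDiff 1 (f b) (k + 1))}.encard ≤ K) :
    ∃ (C : ℤ) (K' : ℕ), ∀ b, {k | C < fwdDiff 1 (f b) k}.encard ≤ K' := by
  obtain ⟨C, hC, n, hn⟩ := hL.exists_almost_periodic hf.image_Icc
  refine ⟨C, (K + 1) * n, fun b => encard_le_of_segments (hsign b) fun u z huz => ?_⟩
  have hsame (j) (hj : j ∈ Ico u z) : 0 < fwdDiff 1 (f b) j ↔ 0 < fwdDiff 1 (f b) (j + 1) :=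
    not_not.1 fun h => disjoint_left.1 huz h hj
  obtain hempty | ⟨k, hk, hkuz⟩ := ({k | C < fwdDiff 1 (f b) k} ∩ Icc u z).eq_empty_or_nonempty
  · simp [hempty]
  have hmono := strictMonoOn_Icc_of_pos_fwdDiff hsame hkuz (hC.trans hk)
  have hsub : Icc u z ⊆ Icc u (z + 1) := Icc_subset_Icc_right (by omega)
  refine (encard_le_encard_of_injOn (f := f b) ?_
    (hmono.injOn.mono (inter_subset_right.trans hsub))).trans
      (hn fun o => o.elim (z + 1) fun o => o.elim u b)
  rintro j ⟨hj, hjuz⟩ hiff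
  obtain ⟨i, hi, hij⟩ := hiff.1 (mem_image_of_mem _ (hsub hjuz))
  have hj' : j + 1 ∈ Icc u (z + 1) := ⟨by linarith [hjuz.1], by linarith [hjuz.2]⟩
  have hlt : f b j + C < f b (j + 1) := lt_sub_iff_add_lt'.1 hj
  have hji : j < i := (hmono.lt_iff_lt (hsub hjuz) hi).1 (hij ▸ lt_add_of_pos_right _ hC)
  exact hji.not_ge (Int.lt_add_one_iff.1 ((hmono.lt_iff_lt hi hj').1 (hij ▸ hlt)))

/-- The superlevel sets of all differences `f b (x + t) - f b x` share an almost period `Q`, and the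
differences along a progression of step `Q` are the case `t = Q`. -/
theorem IsStrong.exists_fwdDiff_almost_periodic (hL : IsStrong L ℤ)
    (hf : DefinableFunFamily L f) : ∃ Q : ℤ, 0 < Q ∧ ∃ K : ℕ, ∀ (c r : ℤ) b,
      {k | ¬ (c < fwdDiff 1 (fun k => f b (r + Q * k)) k ↔
        c < fwdDiff 1 (fun k => f b (r + Q * k)) (k + 1))}.encard ≤ K := by
  obtain ⟨Q, hQ, K, hK⟩ := hL.exists_almost_periodic hf.setOf_lt_sub
  refine ⟨Q, hQ, K, fun c r b => ?_⟩
  refine (encard_le_encard_of_injOn (f := fun k => r + Q * k) ?_ fun i _ j _ hij => ?_).trans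
    (hK fun o => o.elim c fun o => o.elim Q b)
  · intro k hk
    have h₁ : r + Q * (k + 1) = r + Q * k + Q := by ring
    have h₂ : r + Q * (k + 1 + 1) = r + Q * k + Q + Q := by ring
    simpa only [mem_ofPred_eq, fwdDiff, h₁, h₂] using! hk
  · exact mul_left_cancel₀ hQ.ne' (add_left_cancel hij)

theorem breakSet_subset (C₁ C₂ : ℤ) (g : ℤ → ℤ) :
    breakSet (max C₁ C₂) g ⊆ {k | C₁ < fwdDiff 1 g k} ∪ {k | C₂ < fwdDiff 1 (fun k => -g k) k} ∪
      ⋃ c ∈ Finset.Icc (-max C₁ C₂ - 1) (max C₁ C₂),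
        {k | ¬ (c < fwdDiff 1 g k ↔ c < fwdDiff 1 g (k + 1))} := by
  intro k hk
  have hneg : fwdDiff 1 (fun k => -g k) k = -fwdDiff 1 g k := by simp only [fwdDiff]; ring
  simp only [mem_union, mem_ofPred_eq, hneg, mem_iUnion, exists_prop, Finset.mem_Icc]
  by_contra! hcon
  have hC : |fwdDiff 1 g k| ≤ max C₁ C₂ := by
    rw [abs_le]
    omega
  obtain hne | hlt := hk
  · rw [abs_le] at hC
    obtain h | h := hne.lt_or_gt
    · have := hcon.2 _ ⟨by linarith, hC.2⟩
      omega
    · have := hcon.2 (fwdDiff 1 g k - 1) ⟨by linarith, by linarith⟩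
      omega
  · exact hlt.not_ge hC

theorem IsStrong.exists_encard_breakSet_le (hL : IsStrong L ℤ) (hf : DefinableFunFamily L f) :
    ∃ Q : ℤ, 0 < Q ∧ ∃ (C : ℤ) (K : ℕ), ∀ (r : ℤ) b,
      (breakSet C fun k => f b (r + Q * k)).encard ≤ K := by
  obtain ⟨Q, hQ, K, hK⟩ := hL.exists_fwdDiff_almost_periodic hf
  obtain ⟨C₁, K₁, hK₁⟩ := hL.exists_fwdDiff_bound (hf.progression Q) fun v => hK 0 _ _
  obtain ⟨C₂, K₂, hK₂⟩ := hL.exists_fwdDiff_bound (hf.progression Q).neg (K := K) fun v => by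
    refine (encard_le_encard fun k hk => ?_).trans (hK (-1) (v none) (v ∘ some))
    simp only [fwdDiff, mem_ofPred_eq] at hk ⊢
    omega
  set T := Finset.Icc (-max C₁ C₂ - 1) (max C₁ C₂)
  refine ⟨Q, hQ, max C₁ C₂, K₁ + K₂ + T.card * K, fun r b => ?_⟩
  refine (encard_le_encard (breakSet_subset C₁ C₂ _)).trans ?_
  push_cast
  have hthreshold := (T.set_encard_biUnion_le _).trans
    (Finset.sum_le_card_nsmul T _ _ fun c _ => hK c r b)
  rw [nsmul_eq_mul] at hthreshold
  have h₁ := hK₁ fun o => o.elim r b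
  have h₂ := hK₂ fun o => o.elim r b
  exact (encard_union_le _ _).trans
    (add_le_add ((encard_union_le _ _).trans (add_le_add h₁ h₂)) hthreshold)

end Differences

section Extrapolation

variable {C a u z k x : ℤ} {g : ℤ → ℤ}

theorem fwdDiff_eq_of_disjoint_breakSet (h : Disjoint (breakSet C g) (Ico u z))
    (hk : k ∈ Icc u z) : fwdDiff 1 g u = fwdDiff 1 g k :=
  eq_of_forall_Ico_eq_add_one (h := fun j => fwdDiff 1 g j)
    (fun _ hj => not_not.1 fun hne => disjoint_right.1 h hj (.inl hne)) hk

theorem eq_add_fwdDiff_mul_of_disjoint_breakSet (h : Disjoint (breakSet C g) (Ico u z))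
    (hk : k ∈ Icc u z) : g k = g u + fwdDiff 1 g u * (k - u) := by
  have hstep (j) (hj : j ∈ Ico u z) :
      g j - fwdDiff 1 g u * j = g (j + 1) - fwdDiff 1 g u * (j + 1) := by
    rw [fwdDiff_eq_of_disjoint_breakSet h (Ico_subset_Icc_self hj), fwdDiff]
    ring
  linarith [eq_of_forall_Ico_eq_add_one (h := fun j => g j - fwdDiff 1 g u * j) hstep hk]

theorem eq_extrapolation_of_disjoint_breakSet
    (h : Disjoint (breakSet C g) (Ico a x ∪ Ico x a)) :
    g x = g a + fwdDiff 1 g a * (x - a) := by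
  rw [disjoint_union_right] at h
  obtain hax | hxa := le_total a x
  · exact eq_add_fwdDiff_mul_of_disjoint_breakSet h.1 (right_mem_Icc.2 hax)
  · have hg := eq_add_fwdDiff_mul_of_disjoint_breakSet h.2 (right_mem_Icc.2 hxa)
    rw [fwdDiff_eq_of_disjoint_breakSet h.2 (right_mem_Icc.2 hxa)] at hg
    linarith

theorem abs_fwdDiff_le_of_disjoint_breakSet (h : Disjoint (breakSet C g) (Ico a x ∪ Ico x a))
    (hne : x ≠ a) : |fwdDiff 1 g a| ≤ C := by
  rw [disjoint_union_right] at h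
  refine not_lt.1 fun hC => ?_
  obtain hax | hxa := hne.symm.lt_or_gt
  · exact disjoint_left.1 h.1 (.inr hC) (left_mem_Ico.2 hax)
  · rw [← fwdDiff_eq_of_disjoint_breakSet h.2 (right_mem_Icc.2 hxa.le)] at hC
    exact disjoint_left.1 h.2 (.inr hC) (left_mem_Ico.2 hxa)

theorem exists_add_disjoint_Ico {A : Set ℤ} (hA : A.Nonempty) (x : ℤ) :
    ∃ e ∈ A, ∃ ρ ∈ ({0, 1} : Finset ℤ), Disjoint A (Ico (e + ρ) x ∪ Ico x (e + ρ)) := by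
  by_cases hlt : ∃ e ∈ A, e < x
  · obtain ⟨e, ⟨he, hex⟩, hmax⟩ :=
      Int.exists_greatest_of_bdd (P := fun e => e ∈ A ∧ e < x) ⟨x, fun _ h => h.2.le⟩ hlt
    refine ⟨e, he, 1, by simp, disjoint_left.2 fun y hy hyx => ?_⟩
    have := fun h => hmax y ⟨hy, h⟩
    simp only [mem_union, mem_Ico] at hyx
    omega
  · push Not at hlt
    obtain ⟨e, he, hmin⟩ := Int.exists_least_of_bdd (P := (· ∈ A)) ⟨x, hlt⟩ hA
    refine ⟨e, he, 0, by simp, disjoint_left.2 fun y hy hyx => ?_⟩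
    have := hmin y hy
    have := hlt e he
    simp only [mem_union, mem_Ico] at hyx
    omega

/-- The points of `A` do not separate `a` from `x`, and `c` is the slope of `g` at `a`. No condition
is put on `c` when `x = a`, since the slope at a break of `g` may be arbitrarily large. -/
def Extrapolates (A : Set ℤ) (g : ℤ → ℤ) (a c x : ℤ) : Prop :=
  Disjoint A (Ico a x ∪ Ico x a) ∧ (x = a ∨ fwdDiff 1 g a = c)

theorem Extrapolates.eq {A : Set ℤ} {c : ℤ} (h : Extrapolates A g a c x)
    (hA : breakSet C g ⊆ A) : g x = g a + c * (x - a) := by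
  obtain ⟨hdisj, rfl | rfl⟩ := h
  · simp
  · exact eq_extrapolation_of_disjoint_breakSet (hdisj.mono_left hA)

theorem exists_extrapolates {A : Set ℤ} (hne : A.Nonempty) (hA : breakSet C g ⊆ A) (x : ℤ) :
    ∃ e ∈ A, ∃ ρ ∈ ({0, 1} : Finset ℤ), ∃ c ∈ Finset.Icc (-|C|) |C|,
      Extrapolates A g (e + ρ) c x := by
  obtain ⟨e, he, ρ, hρ, hdisj⟩ := exists_add_disjoint_Ico hne x
  by_cases hx : x = e + ρ
  · exact ⟨e, he, ρ, hρ, 0, by simp, hdisj, .inl hx⟩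
  · have hC := abs_fwdDiff_le_of_disjoint_breakSet (hdisj.mono_left hA) hx
    exact ⟨e, he, ρ, hρ, _, Finset.mem_Icc.2 (abs_le.1 (hC.trans (le_abs_self C))), hdisj, .inr rfl⟩

end Extrapolation

section Transfer

universe u' v'

open DefinesPresburger

variable {L : FirstOrder.Language.{u, v}} [L.Structure ℤ] [DefinesPresburger L]
  {α : Type*} {A : (α → ℤ) → Set ℤ} {f : (α → ℤ) → ℤ → ℤ} {C : ℤ} {K : ℕ}

theorem DefinableFunFamily.definableFamily_breakSet [Finite α] (hf : DefinableFunFamily L f)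
    (C : ℤ) : DefinableFamily L fun b => breakSet C (f b) := by
  have hdiff (t : ℤ) : univ.DefinableFun L fun w : Option α → ℤ =>
      fwdDiff 1 (f (w ∘ some)) (w none + t) :=
    definableFun_sub (hf.definableFun_apply (fun _ => .proj L) (by fun_prop))
      (hf.definableFun_apply (fun _ => .proj L) (by fun_prop))
  have hzero : univ.DefinableFun L fun w : Option α → ℤ => fwdDiff 1 (f (w ∘ some)) (w none) := by
    simpa only [add_zero] using hdiff 0
  have habs := (definable_lt (definableFun_const C) hzero).union
    (definable_lt (definableFun_const C) (definableFun_neg hzero))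
  simpa only [DefinableFamily, breakSet, lt_abs] using!
    (hzero.ofPred_eq (hdiff 1)).compl.union habs

theorem DefinableFamily.exists_finset_definableFun (hA : DefinableFamily L A)
    (hK : ∀ b, (A b).encard ≤ K) : ∃ s : Finset ((α → ℤ) → ℤ), s.Nonempty ∧
      (∀ e ∈ s, univ.DefinableFun L e) ∧ ∀ b, A b ⊆ (fun e : (α → ℤ) → ℤ => e b) '' s := by
  classical
  induction K generalizing A with
  | zero =>
    refine ⟨{fun _ => 0}, by simp, by simpa using definableFun_const 0, fun b => ?_⟩
    rw [encard_eq_zero.1 (nonpos_iff_eq_zero.1 (hK b))]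
    exact empty_subset _
  | succ K ih =>
    have hsup := hA.definableFun_sSup
    have hdiff : DefinableFamily L fun b => A b \ {sSup (A b)} :=
      hA.inter ((DefinableFun.proj L).ofPred_eq (definableFun_reindex hsup some)).compl
    obtain ⟨s, -, hs, hsub⟩ := ih hdiff fun b => by
      obtain hempty | hne := (A b).eq_empty_or_nonempty
      · simp [hempty]
      have hbdd : BddAbove (A b) := (finite_of_encard_le_coe (hK b)).bddAbove
      have hle := hK b
      rw [← encard_sdiff_singleton_add_one (Int.csSup_mem hne hbdd)] at hle
      exact_mod_cast (WithTop.add_le_add_iff_right ENat.one_ne_top).1 hle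
    refine ⟨insert (fun b => sSup (A b)) s, by simp, by simpa using ⟨hsup, hs⟩, fun b x hx => ?_⟩
    by_cases hxs : x = sSup (A b)
    · exact ⟨_, Finset.mem_insert_self _ _, hxs.symm⟩
    · exact image_mono (Finset.subset_insert _ _) (hsub b ⟨hx, hxs⟩)

theorem definable_extrapolates {s : Finset ((α → ℤ) → ℤ)} (hs : ∀ e ∈ s, univ.DefinableFun L e)
    {a : (α → ℤ) → ℤ} (ha : univ.DefinableFun L a)
    (hf : univ.DefinableFun L fun b => fwdDiff 1 (f b) (a b)) (c : ℤ) :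
    univ.Definable L {w : Option α → ℤ | Extrapolates ((fun e : (α → ℤ) → ℤ => e (w ∘ some)) '' s)
      (f (w ∘ some)) (a (w ∘ some)) c (w none)} := by
  have hx : univ.DefinableFun L fun w : Option α → ℤ => w none := .proj L
  have ha' := definableFun_reindex ha (some : α → Option α)
  have hf' := definableFun_reindex hf (some : α → Option α)
  have hnot (e : s) : univ.Definable L {w : Option α → ℤ |
      e.1 (w ∘ some) ∉ Ico (a (w ∘ some)) (w none) ∪ Ico (w none) (a (w ∘ some))} := by
    have he := definableFun_reindex (hs e.1 e.2) (some : α → Option α)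
    exact (((definable_le ha' he).inter (definable_lt he hx)).union
      ((definable_le hx he).inter (definable_lt he ha'))).compl
  convert! (definable_iInter_of_finite hnot).inter
    ((hx.ofPred_eq ha').union (hf'.ofPred_eq_const (mem_univ c))) using 1
  ext w
  simp [Extrapolates, disjoint_left]

variable {L' : FirstOrder.Language.{u', v'}} [L'.Structure ℤ] [DefinesPresburger L']

theorem DefinableFunFamily.of_encard_breakSet_le [Finite α] (hf : DefinableFunFamily L f)
    (hK : ∀ b, (breakSet C (f b)).encard ≤ K)
    (ih : ∀ {F : (α → ℤ) → ℤ}, univ.DefinableFun L F → univ.DefinableFun L' F) :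
    DefinableFunFamily L' f := by
  obtain ⟨s, hs, hsdef, hsub⟩ := (hf.definableFamily_breakSet C).exists_finset_definableFun hK
  have hanchor (e : s) (t : ℤ) : univ.DefinableFun L fun b => e.1 b + t :=
    definableFun_add (hsdef e.1 e.2) (definableFun_const t)
  have hval (e : s) (t : ℤ) : univ.DefinableFun L fun b => f b (e.1 b + t) :=
    hf.definableFun_apply (fun _ => .proj L) (hanchor e t)
  have hslope (e : s) (t : ℤ) : univ.DefinableFun L fun b => fwdDiff 1 (f b) (e.1 b + t) := by
    simpa only [fwdDiff, add_assoc] using definableFun_sub (hval e (t + 1)) (hval e t)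
  refine definableFun_piecewise (ι := s × ({0, 1} : Finset ℤ) × Finset.Icc (-|C|) |C|)
    (h := fun i w => f (w ∘ some) (i.1.1 (w ∘ some) + i.2.1) +
      i.2.2 * (w none - (i.1.1 (w ∘ some) + i.2.1)))
    (fun i => definable_extrapolates (fun e he => ih (hsdef e he)) (ih (hanchor i.1 i.2.1))
      (ih (hslope i.1 i.2.1)) i.2.2)
    (fun i => ?_) (fun i w hi => hi.eq (hsub _)) fun w => ?_
  · have ha := definableFun_reindex (ih (hanchor i.1 i.2.1)) (some : α → Option α)
    exact definableFun_add (definableFun_reindex (ih (hval i.1 i.2.1)) some)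
      (definableFun_const_mul _ (definableFun_sub (.proj L') ha))
  · obtain ⟨_, ⟨e, he, rfl⟩, ρ, hρ, c, hc, hx⟩ :=
      exists_extrapolates (hs.to_set.image _) (hsub (w ∘ some)) (w none)
    exact ⟨(⟨e, he⟩, ⟨ρ, hρ⟩, ⟨c, hc⟩), hx⟩

theorem DefinableFunFamily.of_isStrong [Finite α] (hL : IsStrong L ℤ)
    (hf : DefinableFunFamily L f)
    (ih : ∀ {F : (α → ℤ) → ℤ}, univ.DefinableFun L F → univ.DefinableFun L' F) :
    DefinableFunFamily L' f := by
  obtain ⟨Q, hQ, C, K, hK⟩ := hL.exists_encard_breakSet_le hf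
  have hprogression (r : ℤ) : DefinableFunFamily L' fun b k => f b (r + Q * k) := by
    have hr : DefinableFunFamily L fun b k => f b (r + Q * k) :=
      hf.definableFun_apply (fun _ => .proj L) (by fun_prop)
    exact hr.of_encard_breakSet_le (hK r) ih
  refine definableFun_piecewise (ι := Finset.Ico 0 Q)
    (p := fun r w => w none % Q = r) (h := fun r w => f (w ∘ some) (r + Q * (w none / Q)))
    (fun r => (definableFun_emod_const hQ (.proj L')).ofPred_eq_const (mem_univ _))
    (fun r => (hprogression r).definableFun_apply (fun _ => .proj L')
      (definableFun_ediv_const hQ (.proj L')))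
    (fun r w hr => ?_) fun w => ?_
  · rw [← hr, Int.emod_add_mul_ediv]
  · exact ⟨⟨w none % Q, Finset.mem_Ico.2 ⟨Int.emod_nonneg _ hQ.ne', Int.emod_lt_of_pos _ hQ⟩⟩, rfl⟩

theorem IsStrong.definableFun [Finite α] (hL : IsStrong L ℤ) {F : (α → ℤ) → ℤ}
    (hF : univ.DefinableFun L F) : univ.DefinableFun L' F := by
  induction α using Finite.induction_empty_option with
  | of_equiv e ih =>
    have h := definableFun_reindex (ih (definableFun_reindex hF e.symm)) e
    simpa only [Function.comp_assoc, Equiv.self_comp_symm, Function.comp_id] using h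
  | h_empty =>
    have hconst : F = fun _ => F default := funext fun v => congrArg F (Subsingleton.elim v _)
    exact hconst ▸ definableFun_const _
  | h_option ih =>
    let f (b : _ → ℤ) (x : ℤ) : ℤ := F fun o => o.elim x b
    have hf (w) : f (w ∘ some) (w none) = F w :=
      congrArg F (funext fun o => by cases o <;> rfl)
    simpa only [DefinableFunFamily, hf] using
      DefinableFunFamily.of_isStrong hL (f := f) (by simpa only [DefinableFunFamily, hf]) ih

end Transfer

section Languages

theorem definable_setOf_relMap {L : FirstOrder.Language.{u, v}} {M : Type w} [L.Structure M]
    (A : Set M) {n : ℕ} (r : L.Relations n) :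
    A.Definable L {v : Fin n → M | Language.Structure.RelMap r v} := by
  refine Definable.mono (empty_definable_iff.2 ⟨r.formula Language.Term.var, ?_⟩) (empty_subset A)
  ext v
  simp [Language.Formula.realize_rel]

instance : DefinesPresburger Loag where
  add := .of_empty (.fun_symbol (L := Loag) OagFunc.add)
  lt := definable_setOf_relMap univ (L := Loag) OagRel.lt

theorem definesPresburger_structR (m : ℕ) (R : Set (Fin m → ℤ)) :
    @DefinesPresburger (LoagR m) (structR m R) :=
  let := structR m R
  { add := .of_empty (.fun_symbol (L := LoagR m) OagFunc.add)
    lt := definable_setOf_relMap univ (L := LoagR m) OagRRel.lt }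

theorem definable_structR (m : ℕ) (R : Set (Fin m → ℤ)) :
    @Definable ℤ univ (LoagR m) (structR m R) _ R :=
  let := structR m R
  definable_setOf_relMap univ (L := LoagR m) OagRRel.r

end Languages

theorem statement_18_general {L : FirstOrder.Language.{u, v}} [L.Structure ℤ] [DefinesPresburger L]
    {α : Type*} [Finite α] (hL : IsStrong L ℤ) {R : Set (α → ℤ)} (hR : univ.Definable L R) :
    univ.Definable Loag R := by
  classical
  have hindicator : univ.DefinableFun L fun v => if v ∈ R then (1 : ℤ) else 0 :=
    .ite hR (DefinesPresburger.definableFun_const 1) (DefinesPresburger.definableFun_const 0)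
  simpa using (hL.definableFun (L' := Loag) hindicator).ofPred_eq_const (mem_univ 1)

/-- If `m ≥ 1`, `R ⊆ ℤ^m`, and the theory of `⟨ℤ; 0, +, −, <, R⟩` is strong,
then `R` is definable with parameters in Presburger arithmetic `⟨ℤ; 0, +, −, <⟩`. -/
theorem statement_18 (m : ℕ) (hm : 1 ≤ m) (R : Set (Fin m → ℤ))
    (hstrong : @IsStrong (LoagR m) ℤ (structR m R)) :
    (Set.univ : Set ℤ).Definable Loag R := by
  let := structR m R
  have := definesPresburger_structR m R
  exact statement_18_general hstrong (definable_structR m R)
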